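/- Let k > 0, let L ≥ 1 be a natural number with incident directions d_l = (cos(2πl/L), sin(2πl/L)) for l = 1, …, L, let M ∈ ℕ, and let a₁, …, a_M ∈ ℂ and c₁, …, c_M ∈ ℝ². For each l define the far-field model ψ∞(θ; d_l) = Σ_{m=1}^{M} a_m exp(i k d_l · c_m) exp(−i k θ · c_m). Then for every x ∈ ℝ², Σ_{l=1}^{L} exp(−i k d_l · x) ∫₀^{2π} ψ∞(θ(t); d_l) exp(i k θ(t) · x) dt = 2π Σ_{m=1}^{M} a_m J₀(k‖x − c_m‖) Σ_{l=1}^{L} exp(i k d_l · (c_m − x)). -/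

import Mathlib

/-!
The identity reduces, by linearity, to the single-source formula
`∫₀^{2π} exp(i k θ(t)·y) dt = 2π J₀(k‖y‖)` (`integral_exp_inner_uc`) applied at `y = x - c m`: the
phases at `θ(t)` combine to `exp(i k θ(t)·(x - c m))`, and those at `d_l` to
`exp(i k d_l·(c m - x))`.

For the single-source formula, polar coordinates `y = ‖y‖ (cos φ, sin φ)` give
`θ(t)·y = ‖y‖ cos (t - φ)`, and periodicity removes `φ`. The remaining integral
`∫₀^{2π} exp(i s cos t) dt` is computed by expanding the exponential and integrating termwise: the
odd moments of the cosine vanish, and the even ones, `2π (2m)! / (4^m (m!)²)`, turn the exponential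
series into the power series of `J₀`.
-/

open scoped Real
open RealInnerProductSpace

/-- Bessel function of the first kind of integer order `n`. -/
noncomputable def besselJ (n : ℕ) (z : ℝ) : ℝ :=
  ∑' m : ℕ, (-1 : ℝ) ^ m / (Nat.factorial m * Nat.factorial (m + n)) * (z / 2) ^ (2 * m + n)

/-- Parametrization of the unit circle in ℝ². -/
noncomputable def uc (t : ℝ) : EuclideanSpace ℝ (Fin 2) :=
  (WithLp.equiv 2 (Fin 2 → ℝ)).symm ![Real.cos t, Real.sin t]


theorem integral_cos_pow_odd_two_pi (m : ℕ) :
    ∫ t in (0:ℝ)..(2*π), Real.cos t ^ (2 * m + 1) = 0 := by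
  induction m with
  | zero => simp
  | succ m ih =>
    rw [show 2 * (m + 1) + 1 = (2 * m + 1) + 2 by ring, integral_cos_pow, ih]
    simp

theorem integral_cos_pow_even_two_pi (m : ℕ) :
    ∫ t in (0:ℝ)..(2*π), Real.cos t ^ (2 * m) =
      2 * π * ((2 * m).factorial / (4 ^ m * (m.factorial : ℝ) ^ 2)) := by
  induction m with
  | zero => simp
  | succ m ih =>
    rw [show 2 * (m + 1) = 2 * m + 2 by ring, integral_cos_pow, ih]
    have h : (m.factorial : ℝ) ≠ 0 := by positivity
    simp only [Nat.factorial_succ, Real.sin_zero, Real.sin_two_pi]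
    push_cast
    field_simp
    ring

/-- The Bessel integral representation of `J₀`. -/
theorem integral_exp_I_mul_cos (s : ℝ) :
    ∫ t in (0:ℝ)..(2*π), Complex.exp (Complex.I * s * (Real.cos t : ℝ)) =
      2 * π * ((besselJ 0 s : ℝ) : ℂ) := by
  -- Termwise integration of the exponential series, dominated by `∑ |s|ⁿ / n!`.
  have h1 : HasSum (fun n : ℕ => ∫ t in (0:ℝ)..(2*π),
      (Complex.I * s * (Real.cos t : ℝ)) ^ n / (n.factorial : ℂ))
      (∫ t in (0:ℝ)..(2*π), Complex.exp (Complex.I * s * (Real.cos t : ℝ))) := by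
    refine intervalIntegral.hasSum_integral_of_dominated_convergence
      (fun n _ => |s| ^ n / (n.factorial : ℝ)) ?_ ?_ ?_ ?_ ?_
    · intro n
      exact (by fun_prop : Continuous fun t : ℝ =>
        (Complex.I * s * (Real.cos t : ℝ)) ^ n / (n.factorial : ℂ)).aestronglyMeasurable
    · intro n
      refine Filter.Eventually.of_forall fun t _ => ?_
      rw [norm_div, norm_pow, Complex.norm_natCast]
      gcongr
      rw [norm_mul, norm_mul, Complex.norm_I, one_mul, Complex.norm_real, Complex.norm_real,
        Real.norm_eq_abs, Real.norm_eq_abs]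
      exact mul_le_of_le_one_right (abs_nonneg s) (Real.abs_cos_le_one t)
    · exact Filter.Eventually.of_forall fun t _ => Real.summable_pow_div_factorial |s|
    · exact intervalIntegrable_const
    · refine Filter.Eventually.of_forall fun t _ => ?_
      rw [Complex.exp_eq_exp_ℂ]
      exact NormedSpace.expSeries_div_hasSum_exp _
  have h2 : ∀ n : ℕ, ∫ t in (0:ℝ)..(2*π),
      (Complex.I * s * (Real.cos t : ℝ)) ^ n / (n.factorial : ℂ) =
      (Complex.I * s) ^ n / (n.factorial : ℂ) *
        ((∫ t in (0:ℝ)..(2*π), Real.cos t ^ n : ℝ) : ℂ) := by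
    intro n
    rw [← intervalIntegral.integral_ofReal, ← intervalIntegral.integral_const_mul]
    congr 1
    ext t
    push_cast
    ring
  simp_rw [h2] at h1
  have hinj : Function.Injective fun m : ℕ => 2 * m := fun a b h => by
    simpa using h
  rw [← hinj.hasSum_iff] at h1
  · rw [← h1.tsum_eq, besselJ, Complex.ofReal_tsum, ← tsum_mul_left]
    congr 1
    ext m
    simp only [Function.comp_apply]
    rw [integral_cos_pow_even_two_pi, mul_pow, pow_mul Complex.I, Complex.I_sq]
    have h : (m.factorial : ℂ) ≠ 0 := by exact_mod_cast m.factorial_ne_zero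
    have hfac : ((2 * m).factorial : ℂ) ≠ 0 := by exact_mod_cast (2 * m).factorial_ne_zero
    have h4 : (4 : ℂ) ^ m = 2 ^ (2 * m) := by rw [pow_mul]; norm_num
    push_cast
    rw [h4, add_zero, add_zero, div_pow]
    field_simp
  · intro n hn
    obtain ⟨m, rfl | rfl⟩ := n.even_or_odd'
    · exact absurd ⟨m, rfl⟩ hn
    · rw [integral_cos_pow_odd_two_pi]
      simp

theorem continuous_uc : Continuous uc := by
  refine (PiLp.continuous_toLp 2 _).comp (continuous_pi fun i => ?_)
  fin_cases i
  · exact Real.continuous_cos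
  · exact Real.continuous_sin

/-- Polar form of the inner product with a point of the unit circle. -/
theorem exists_inner_uc_eq (y : EuclideanSpace ℝ (Fin 2)) :
    ∃ φ : ℝ, ∀ t : ℝ, (⟪uc t, y⟫ : ℝ) = ‖y‖ * Real.cos (t - φ) := by
  have hn : ‖(⟨y 0, y 1⟩ : ℂ)‖ = ‖y‖ := by
    rw [EuclideanSpace.norm_eq, Complex.norm_def, Complex.normSq_mk]
    simp [Fin.sum_univ_two, sq]
  refine ⟨Complex.arg ⟨y 0, y 1⟩, fun t => ?_⟩
  have hc := Complex.norm_mul_cos_arg ⟨y 0, y 1⟩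
  have hs := Complex.norm_mul_sin_arg ⟨y 0, y 1⟩
  rw [hn] at hc hs
  have hi : (⟪uc t, y⟫ : ℝ) = Real.cos t * y 0 + Real.sin t * y 1 := by
    simp [uc, PiLp.inner_apply, Fin.sum_univ_two, mul_comm]
  rw [hi, Real.cos_sub]
  simp only at hc hs
  linear_combination (-Real.cos t) * hc - Real.sin t * hs

/-- The integral of a plane wave over the unit circle is radial in `y`, given by `J₀`. -/
theorem integral_exp_inner_uc (k : ℝ) (y : EuclideanSpace ℝ (Fin 2)) :
    ∫ t in (0:ℝ)..(2*π), Complex.exp (Complex.I * k * (⟪uc t, y⟫ : ℝ)) =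
      2 * π * ((besselJ 0 (k * ‖y‖) : ℝ) : ℂ) := by
  obtain ⟨φ, hφ⟩ := exists_inner_uc_eq y
  rw [← integral_exp_I_mul_cos]
  have hper : Function.Periodic
      (fun t : ℝ => Complex.exp (Complex.I * (k * ‖y‖ : ℝ) * (Real.cos t : ℝ))) (2 * π) := by
    intro t
    simp only [Real.cos_add_two_pi]
  have h := hper.intervalIntegral_add_eq (0 - φ) 0
  rw [zero_add, show 0 - φ + 2 * π = 2 * π - φ by ring] at h
  rw [← h, ← intervalIntegral.integral_comp_sub_right
    (fun t : ℝ => Complex.exp (Complex.I * (k * ‖y‖ : ℝ) * (Real.cos t : ℝ)))]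
  congr 1
  ext t
  rw [hφ]
  push_cast
  ring_nf

/-- Σ_{l=1}^{L} e^{−ikd_l·x} ∫₀^{2π} ψ∞(θ(t); d_l) e^{ikθ(t)·x} dt
  = 2π Σ_m a_m J₀(k‖x−c_m‖) Σ_{l=1}^{L} e^{ikd_l·(c_m−x)}. -/
theorem sum_integral_farField_multiIncident (k : ℝ) (hk : 0 < k) (L : ℕ) (hL : 1 ≤ L)
    (M : ℕ) (a : Fin M → ℂ) (c : Fin M → EuclideanSpace ℝ (Fin 2))
    (ψ : EuclideanSpace ℝ (Fin 2) → EuclideanSpace ℝ (Fin 2) → ℂ)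
    (hψ : ∀ dl θ : EuclideanSpace ℝ (Fin 2), ψ θ dl =
      ∑ m, a m * Complex.exp (Complex.I * k * (⟪dl, c m⟫ : ℝ)) *
        Complex.exp (-(Complex.I * k * (⟪θ, c m⟫ : ℝ))))
    (x : EuclideanSpace ℝ (Fin 2)) :
    (∑ l ∈ Finset.Icc 1 L,
        Complex.exp (-(Complex.I * k * (⟪uc (2 * π * l / L), x⟫ : ℝ))) *
          ∫ t in (0:ℝ)..(2*π),
            ψ (uc t) (uc (2 * π * l / L)) *
              Complex.exp (Complex.I * k * (⟪uc t, x⟫ : ℝ)))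
      = 2 * π * ∑ m, a m * ((besselJ 0 (k * ‖x - c m‖) : ℝ) : ℂ) *
          ∑ l ∈ Finset.Icc 1 L,
            Complex.exp (Complex.I * k * (⟪uc (2 * π * l / L), c m - x⟫ : ℝ)) := by
  -- The far-field integral for a fixed incident direction `d`.
  have h_inner : ∀ d : EuclideanSpace ℝ (Fin 2),
      ∫ t in (0:ℝ)..(2*π), ψ (uc t) d * Complex.exp (Complex.I * k * (⟪uc t, x⟫ : ℝ)) =
      ∑ m, a m * Complex.exp (Complex.I * k * (⟪d, c m⟫ : ℝ)) *
        (2 * π * ((besselJ 0 (k * ‖x - c m‖) : ℝ) : ℂ)) := by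
    intro d
    simp_rw [← integral_exp_inner_uc, ← intervalIntegral.integral_const_mul]
    rw [← intervalIntegral.integral_finsetSum]
    · congr 1
      ext t
      rw [hψ, Finset.sum_mul]
      refine Finset.sum_congr rfl fun m _ => ?_
      rw [mul_assoc, ← Complex.exp_add, inner_sub_right]
      push_cast
      ring_nf
    · intro m _
      have := continuous_uc
      exact Continuous.intervalIntegrable (by fun_prop) _ _
  simp_rw [h_inner, Finset.mul_sum]
  rw [Finset.sum_comm]
  refine Finset.sum_congr rfl fun m _ => Finset.sum_congr rfl fun l _ => ?_
  rw [inner_sub_right, Complex.ofReal_sub, mul_sub, sub_eq_add_neg (Complex.I * _ * _),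
    Complex.exp_add]
  ring
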